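/- If a mixed state ρ on a bipartite Hilbert space of dimension d₁×d₂ satisfies tr(ρ²) ≤ 1/(d₁d₂ − 1), then ρ is separable. -/

import Mathlib

open Matrix Kronecker
open scoped BigOperators ComplexOrder

/-- A density matrix: positive semidefinite with unit trace. -/
def IsDensity {m : Type*} [Fintype m] [DecidableEq m] (ρ : Matrix m m ℂ) : Prop :=
  ρ.PosSemidef ∧ ρ.trace = 1

/-- A separable bipartite state: a finite convex combination of
pure product states `|a⟩⟨a| ⊗ |b⟩⟨b|` with unit vectors `a, b`. -/
def SeparableState {d₁ d₂ : ℕ}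
    (ρ : Matrix (Fin d₁ × Fin d₂) (Fin d₁ × Fin d₂) ℂ) : Prop :=
  ∃ (n : ℕ) (p : Fin n → ℝ) (a : Fin n → (Fin d₁ → ℂ)) (b : Fin n → (Fin d₂ → ℂ)),
    (∀ i, 0 ≤ p i) ∧ (∑ i, p i) = 1 ∧
    (∀ i, ∑ x, ‖a i x‖ ^ 2 = 1) ∧ (∀ i, ∑ x, ‖b i x‖ ^ 2 = 1) ∧
    ρ = ∑ i, (p i : ℂ) •
      (Matrix.vecMulVec (a i) (star (a i)) ⊗ₖ Matrix.vecMulVec (b i) (star (b i)))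

/-!
If `ρ` is not separable, Hahn–Banach separates it from the compact convex hull of the pure product
states by a Hermitian block-positive `W` with `tr (W ρ) < 0`.

A block-positive `W` satisfies `tr (W²) ≤ (tr W)²`. Indeed every compression of `W` by a vector `y`
of the second factor is positive semidefinite, so its `2 × 2` principal minors are nonnegative.
They are of degree two in `|y⟩⟨y|`, and averaging them over a projective 2-design gives
`tr (W²) + tr (W₁²) ≤ (tr W)² + tr (W₂²)`, where `W₁`, `W₂` are the operators induced on the two
factors by the partial traces. Exchanging the factors and adding the two inequalities cancels the
partial traces.

Finally, let `t = tr W`, `s = tr (ρ²)` and let `d` be the dimension. For `s (d - 1) ≤ 1`, expanding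
`0 ≤ tr ((t ρ + s W - t s)²)` and bounding `tr (W²)` by `t²` leaves `0 ≤ 2 t s tr (W ρ)`.
-/

universe u

section ProjectiveTwoDesign

/-- A weighted complex projective 2-design, with vectors of arbitrary length: the average of
`(|u⟩⟨u|)^{⊗ 2}` is the identity plus the swap, that is, twice the projection onto the symmetric
subspace. This is encoded by pairing both sides with `M ⊗ N`. -/
structure IsProjectiveTwoDesign {ι m : Type*} [Fintype ι] [Fintype m]
    (c : ι → ℝ) (u : ι → m → ℂ) : Prop where
  nonneg : ∀ s, 0 ≤ c s
  sum_eq : ∀ M N : Matrix m m ℂ,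
    ∑ s, c s * ((star (u s) ⬝ᵥ M *ᵥ u s) * (star (u s) ⬝ᵥ N *ᵥ u s)) =
      M.trace * N.trace + (M * N).trace

/-- The vector with entries `exp (2πi ω / 3)`. Together with the basis vectors these vectors make
up a projective 2-design. -/
noncomputable def cubicPhase {m : Type*} (ω : m → ZMod 3) : m → ℂ :=
  fun i => ZMod.stdAddChar (ω i)

-- Cube roots of unity are needed here: modulo 2 the case `i = k`, `j = l` would also occur.
lemma forall_apply_add_apply_eq_iff {m : Type*} {i j k l : m} :
    (∀ ω : m → ZMod 3, ω j + ω l = ω i + ω k) ↔ (i = j ∧ k = l) ∨ (i = l ∧ k = j) := by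
  classical
  refine ⟨fun h => ?_, ?_⟩
  · have hi := h (Pi.single i 1)
    have hk := h (Pi.single k 1)
    simp only [Pi.single_apply] at hi hk
    grind
  · rintro (⟨rfl, rfl⟩ | ⟨rfl, rfl⟩) ω
    · rfl
    · exact add_comm _ _

lemma sum_cubicPhase {m : Type*} [Fintype m] [DecidableEq m] (i j k l : m) :
    ∑ ω : m → ZMod 3, star (cubicPhase ω i) * cubicPhase ω j *
        (star (cubicPhase ω k) * cubicPhase ω l) =
      if (i = j ∧ k = l) ∨ (i = l ∧ k = j) then (Fintype.card (m → ZMod 3) : ℂ) else 0 := by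
  let ev : m → (m → ZMod 3) →+ ZMod 3 := Pi.evalAddMonoidHom fun _ => ZMod 3
  let χ : AddChar (m → ZMod 3) ℂ :=
    ZMod.stdAddChar.compAddMonoidHom (ev j + ev l - (ev i + ev k))
  have hχ : χ = 0 ↔ (i = j ∧ k = l) ∨ (i = l ∧ k = j) := by
    rw [← forall_apply_add_apply_eq_iff, DFunLike.ext_iff]
    refine forall_congr' fun ω => ?_
    rw [AddChar.compAddMonoidHom_apply, AddChar.zero_apply,
      ← AddChar.map_zero_eq_one (ZMod.stdAddChar (N := 3)), ZMod.injective_stdAddChar.eq_iff]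
    simp [ev, sub_eq_zero]
  simp only [← hχ, ← AddChar.sum_eq_ite]
  refine Finset.sum_congr rfl fun ω _ => ?_
  simp only [χ, ev, cubicPhase, Complex.star_def, ← AddChar.map_neg_eq_conj,
    ← AddChar.map_add_eq_mul, AddChar.compAddMonoidHom_apply]
  congr 1
  simp only [AddMonoidHom.sub_apply, AddMonoidHom.add_apply, Pi.evalAddMonoidHom_apply]
  ring

lemma star_dotProduct_mulVec_mul {m R : Type*} [Fintype m] [CommSemiring R] [StarRing R]
    (M N : Matrix m m R) (u : m → R) :
    (star u ⬝ᵥ M *ᵥ u) * (star u ⬝ᵥ N *ᵥ u) =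
      ∑ i, ∑ k, ∑ j, ∑ l, M i j * N k l * (star (u i) * u j * (star (u k) * u l)) := by
  have expand (M : Matrix m m R) :
      star u ⬝ᵥ M *ᵥ u = ∑ i, ∑ j, M i j * (star (u i) * u j) := by
    simp only [dotProduct, mulVec, Pi.star_apply, Finset.mul_sum, mul_left_comm]
  simp only [expand, Finset.sum_mul_sum, mul_mul_mul_comm]

lemma sum_mul_pairings_add_sum_diag {m R : Type*} [Fintype m] [DecidableEq m] [CommRing R]
    (M N : Matrix m m R) :
    ∑ i, ∑ k, ∑ j, ∑ l, M i j * N k l *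
        (if (i = j ∧ k = l) ∨ (i = l ∧ k = j) then 1 else 0) + ∑ i, M i i * N i i =
      M.trace * N.trace + (M * N).trace := by
  have inclusion_exclusion (i j k l : m) :
      (if (i = j ∧ k = l) ∨ (i = l ∧ k = j) then (1 : R) else 0) =
        (if i = j then if k = l then 1 else 0 else 0) +
          (if k = j then if i = l then 1 else 0 else 0) -
          if i = j then if i = l then if i = k then 1 else 0 else 0 else 0 := by
    split_ifs <;> simp_all
  simp only [inclusion_exclusion, mul_sub, mul_add, Finset.sum_sub_distrib,
    Finset.sum_add_distrib, mul_ite, mul_one, mul_zero]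
  simp [Matrix.trace, Matrix.mul_apply, Finset.sum_mul_sum]

lemma sum_cubicPhase_dotProduct_mulVec_mul {m : Type*} [Fintype m] [DecidableEq m]
    (M N : Matrix m m ℂ) :
    ∑ ω : m → ZMod 3, (star (cubicPhase ω) ⬝ᵥ M *ᵥ cubicPhase ω) *
        (star (cubicPhase ω) ⬝ᵥ N *ᵥ cubicPhase ω) =
      Fintype.card (m → ZMod 3) * ∑ i, ∑ k, ∑ j, ∑ l, M i j * N k l *
        (if (i = j ∧ k = l) ∨ (i = l ∧ k = j) then 1 else 0) := by
  simp only [star_dotProduct_mulVec_mul, Finset.sum_comm (γ := m → ZMod 3), ← Finset.mul_sum,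
    sum_cubicPhase]
  simp [Finset.mul_sum, mul_comm]

lemma exists_isProjectiveTwoDesign (m : Type u) [Fintype m] :
    ∃ (ι : Type u) (_ : Fintype ι) (c : ι → ℝ) (u : ι → m → ℂ), IsProjectiveTwoDesign c u := by
  classical
  refine ⟨(m → ZMod 3) ⊕ m, inferInstance,
    Sum.elim (fun _ => (Fintype.card (m → ZMod 3) : ℝ)⁻¹) fun _ => 1,
    Sum.elim cubicPhase fun i => Pi.single i 1, ?_, fun M N => ?_⟩
  · rintro (ω | i) <;> simp
  rw [Fintype.sum_sum_type, ← sum_mul_pairings_add_sum_diag]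
  congr 1
  · simp only [Sum.elim_inl, ← Finset.mul_sum, sum_cubicPhase_dotProduct_mulVec_mul,
      Complex.ofReal_inv, Complex.ofReal_natCast]
    exact inv_mul_cancel_left₀ (by simp) _
  · simp

end ProjectiveTwoDesign

section PartialTrace

variable {m n R : Type*}

/-- The `(i, j)` block of a bipartite operator, an operator on the second factor. -/
def block (W : Matrix (m × n) (m × n) R) (i j : m) : Matrix n n R :=
  W.submatrix (Prod.mk i) (Prod.mk j)

/-- The partial trace over the first factor, an operator on the second factor. -/
def traceLeft [Fintype m] [AddCommMonoid R] (W : Matrix (m × n) (m × n) R) : Matrix n n R :=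
  ∑ i, block W i i

/-- The partial trace over the second factor, an operator on the first factor. -/
def traceRight [Fintype n] [AddCommMonoid R] (W : Matrix (m × n) (m × n) R) : Matrix m m R :=
  of fun i j => (block W i j).trace

/-- The exchange of the two tensor factors, as an operation on bipartite operators. -/
def swapFactors (W : Matrix (m × n) (m × n) R) : Matrix (n × m) (n × m) R :=
  W.submatrix Prod.swap Prod.swap

lemma traceLeft_swapFactors [Fintype n] [AddCommMonoid R] (W : Matrix (m × n) (m × n) R) :
    traceLeft (swapFactors W) = traceRight W := by
  ext i j
  simp [traceLeft, traceRight, swapFactors, block, Matrix.trace, Matrix.sum_apply]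

lemma traceRight_swapFactors [Fintype m] [AddCommMonoid R] (W : Matrix (m × n) (m × n) R) :
    traceRight (swapFactors W) = traceLeft W :=
  (traceLeft_swapFactors (swapFactors W)).symm

variable [Fintype m] [Fintype n]

lemma trace_eq_sum_trace_block [AddCommMonoid R] (W : Matrix (m × n) (m × n) R) :
    W.trace = ∑ i, (block W i i).trace :=
  Fintype.sum_prod_type _

lemma trace_swapFactors [AddCommMonoid R] (W : Matrix (m × n) (m × n) R) :
    (swapFactors W).trace = W.trace :=
  (Equiv.prodComm n m).sum_comp fun p => W p p

variable [NonUnitalNonAssocSemiring R]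

lemma block_mul (V W : Matrix (m × n) (m × n) R) (i j : m) :
    block (V * W) i j = ∑ k, block V i k * block W k j := by
  ext a b
  simp [block, Matrix.mul_apply, Fintype.sum_prod_type, Matrix.sum_apply]

lemma trace_mul_eq_sum_trace_block (V W : Matrix (m × n) (m × n) R) :
    (V * W).trace = ∑ i, ∑ j, (block V i j * block W j i).trace := by
  simp only [trace_eq_sum_trace_block, block_mul, trace_sum]

lemma trace_swapFactors_mul_swapFactors (V W : Matrix (m × n) (m × n) R) :
    (swapFactors V * swapFactors W).trace = (V * W).trace := by
  rw [← trace_swapFactors (V * W)]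
  exact congrArg Matrix.trace (submatrix_mul_equiv V W _ (Equiv.prodComm n m) _)

end PartialTrace

section ProductProjector

variable {m n : Type*}

/-- The operator `|x⟩⟨x| ⊗ |y⟩⟨y|`, a projector up to a scalar as `x` and `y` may have any
length. -/
def productProjector (x : m → ℂ) (y : n → ℂ) : Matrix (m × n) (m × n) ℂ :=
  vecMulVec x (star x) ⊗ₖ vecMulVec y (star y)

lemma isHermitian_productProjector (x : m → ℂ) (y : n → ℂ) :
    (productProjector x y).IsHermitian := by
  ext p q
  simp only [productProjector, conjTranspose_apply, kroneckerMap_apply, vecMulVec_apply,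
    Pi.star_apply, star_mul', star_star]
  ring

lemma productProjector_smul (r s : ℝ) (x : m → ℂ) (y : n → ℂ) :
    productProjector (r • x) (s • y) = (r ^ 2 * s ^ 2 : ℂ) • productProjector x y := by
  ext p q
  simp only [productProjector, kroneckerMap_apply, vecMulVec_apply, Matrix.smul_apply,
    Pi.smul_apply, Pi.star_apply, star_smul, star_trivial, Complex.real_smul, smul_eq_mul]
  ring

lemma block_productProjector (x : m → ℂ) (y : n → ℂ) (i j : m) :
    block (productProjector x y) i j = (x i * star (x j)) • vecMulVec y (star y) :=
  rfl

lemma swapFactors_productProjector (x : m → ℂ) (y : n → ℂ) :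
    swapFactors (productProjector x y) = productProjector y x := by
  ext p q
  simp [productProjector, swapFactors, mul_comm]

lemma productProjector_single [DecidableEq m] [DecidableEq n] (i : m) (a : n) :
    productProjector (Pi.single i 1) (Pi.single a 1) = single (i, a) (i, a) 1 := by
  rw [productProjector, Pi.star_single, Pi.star_single, star_one,
    ← single_eq_single_vecMulVec_single, ← single_eq_single_vecMulVec_single,
    single_kronecker_single, one_mul]

lemma trace_productProjector [Fintype m] [Fintype n] (x : m → ℂ) (y : n → ℂ) :
    (productProjector x y).trace = (∑ i, ‖x i‖ ^ 2 : ℝ) * (∑ i, ‖y i‖ ^ 2 : ℝ) := by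
  simp [productProjector, trace_kronecker, trace_vecMulVec, dotProduct, Complex.mul_conj']

end ProductProjector

section BlockPositive

variable {m n : Type*} [Fintype n]

/-- The compression `(1 ⊗ ⟨y|) W (1 ⊗ |y⟩)` of a bipartite operator to the first factor. -/
def compression (W : Matrix (m × n) (m × n) ℂ) (y : n → ℂ) : Matrix m m ℂ :=
  of fun i j => star y ⬝ᵥ block W i j *ᵥ y

lemma isHermitian_compression {W : Matrix (m × n) (m × n) ℂ} (hW : W.IsHermitian) (y : n → ℂ) :
    (compression W y).IsHermitian := by
  ext i j
  have block_conjTranspose : (block W j i)ᴴ = block W i j := by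
    rw [block, conjTranspose_submatrix, hW.eq, block]
  rw [conjTranspose_apply, compression, of_apply, of_apply, dotProduct_mulVec, star_dotProduct,
    ← block_conjTranspose, star_mulVec, conjTranspose_conjTranspose]

variable [Fintype m]

lemma star_dotProduct_compression_mulVec (W : Matrix (m × n) (m × n) ℂ) (x : m → ℂ)
    (y : n → ℂ) : star x ⬝ᵥ compression W y *ᵥ x = (W * productProjector x y).trace := by
  have trace_block_mul (i j : m) : (block W i j * block (productProjector x y) j i).trace =
      star (x i) * (compression W y i j * x j) := by
    rw [block_productProjector, Matrix.mul_smul, trace_smul, mul_vecMulVec, trace_vecMulVec,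
      dotProduct_comm, compression, of_apply, smul_eq_mul]
    ring
  simp only [trace_mul_eq_sum_trace_block, trace_block_mul, dotProduct, mulVec, Finset.mul_sum,
    Pi.star_apply]

/-- Block positivity: `W` has a nonnegative expectation `⟨x ⊗ y, W (x ⊗ y)⟩` in every product
vector. The order is that of `ℂ`, so this expectation is also required to be real. -/
def IsBlockPositive (W : Matrix (m × n) (m × n) ℂ) : Prop :=
  ∀ (x : m → ℂ) (y : n → ℂ), 0 ≤ (W * productProjector x y).trace

variable {W : Matrix (m × n) (m × n) ℂ}

lemma IsBlockPositive.posSemidef_compression (hpos : IsBlockPositive W) (hW : W.IsHermitian)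
    (y : n → ℂ) : (compression W y).PosSemidef :=
  .of_dotProduct_mulVec_nonneg (isHermitian_compression hW y) fun x =>
    star_dotProduct_compression_mulVec W x y ▸ hpos x y

lemma IsBlockPositive.swap (hpos : IsBlockPositive W) : IsBlockPositive (swapFactors W) := by
  intro y x
  rw [← swapFactors_productProjector, trace_swapFactors_mul_swapFactors]
  exact hpos x y

lemma IsBlockPositive.trace_nonneg (hpos : IsBlockPositive W) : 0 ≤ W.trace := by
  classical
  refine Finset.sum_nonneg fun p _ => ?_
  simpa [productProjector_single, trace_mul_comm W, trace_single_mul] using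
    hpos (Pi.single p.1 1) (Pi.single p.2 1)

lemma principal_minor_nonneg_of_posSemidef {k 𝕜 : Type*} [RCLike 𝕜] {P : Matrix k k 𝕜}
    (hP : P.PosSemidef) (i j : k) : 0 ≤ P i i * P j j - P i j * P j i := by
  have h := (hP.submatrix ![i, j]).det_nonneg
  rwa [det_fin_two] at h

lemma IsBlockPositive.trace_mul_self_add_traceRight_le (hpos : IsBlockPositive W)
    (hW : W.IsHermitian) :
    (W * W).trace + (traceRight W * traceRight W).trace ≤
      W.trace ^ 2 + (traceLeft W * traceLeft W).trace := by
  obtain ⟨ι, _, c, u, hdesign⟩ := exists_isProjectiveTwoDesign n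
  have average_nonneg : 0 ≤ ∑ s, (c s : ℂ) * ∑ i, ∑ j,
      (compression W (u s) i i * compression W (u s) j j -
        compression W (u s) i j * compression W (u s) j i) :=
    Finset.sum_nonneg fun s _ => mul_nonneg (mod_cast hdesign.nonneg s) <|
      Finset.sum_nonneg fun i _ => Finset.sum_nonneg fun j _ =>
        principal_minor_nonneg_of_posSemidef (hpos.posSemidef_compression hW (u s)) i j
  simp only [Finset.mul_sum, mul_sub, compression, of_apply,
    Finset.sum_comm (s := Finset.univ (α := ι)), Finset.sum_sub_distrib, hdesign.sum_eq,
    Finset.sum_add_distrib] at average_nonneg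
  have trace_sq : W.trace ^ 2 = ∑ i, ∑ j, (block W i i).trace * (block W j j).trace := by
    rw [trace_eq_sum_trace_block, sq, Finset.sum_mul_sum]
  have trace_left :
      (traceLeft W * traceLeft W).trace = ∑ i, ∑ j, (block W i i * block W j j).trace := by
    simp only [traceLeft, Finset.sum_mul_sum, trace_sum]
  have trace_right : (traceRight W * traceRight W).trace =
      ∑ i, ∑ j, (block W i j).trace * (block W j i).trace := rfl
  rw [trace_sq, trace_left, trace_right, trace_mul_eq_sum_trace_block]
  linear_combination average_nonneg

lemma IsBlockPositive.trace_mul_self_le (hpos : IsBlockPositive W) (hW : W.IsHermitian) :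
    (W * W).trace ≤ W.trace ^ 2 := by
  have h := hpos.trace_mul_self_add_traceRight_le hW
  have h_swap := hpos.swap.trace_mul_self_add_traceRight_le (hW.submatrix Prod.swap)
  rw [traceLeft_swapFactors, traceRight_swapFactors, trace_swapFactors_mul_swapFactors,
    trace_swapFactors] at h_swap
  linear_combination (1 / 2) * h + (1 / 2) * h_swap

end BlockPositive

section Purity

variable {k 𝕜 : Type*} [Fintype k] [RCLike 𝕜] {A B : Matrix k k 𝕜}

lemma trace_mul_self_nonneg_of_isHermitian (hA : A.IsHermitian) : 0 ≤ (A * A).trace := by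
  simpa only [hA.eq] using (posSemidef_conjTranspose_mul_self A).trace_nonneg

lemma trace_mul_self_eq_zero_iff_of_isHermitian (hA : A.IsHermitian) :
    (A * A).trace = 0 ↔ A = 0 := by
  rw [← trace_conjTranspose_mul_self_eq_zero_iff (A := A), hA.eq]

lemma trace_mul_self_mul_le_one_of_re_le_one_div {A : Matrix k k ℂ} (hA : A.IsHermitian) {c : ℝ}
    (hc : 0 ≤ c) (h : (A * A).trace.re ≤ 1 / c) : (A * A).trace * c ≤ 1 := by
  have trace_eq_re : (A * A).trace = (A * A).trace.re :=
    Complex.eq_re_of_ofReal_le (r := 0) (mod_cast trace_mul_self_nonneg_of_isHermitian hA)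
  rw [trace_eq_re]
  exact_mod_cast (mul_le_mul_of_nonneg_right h hc).trans (by rw [one_div]; exact inv_mul_le_one)

lemma trace_mul_nonneg_of_purity_mul_le_one
    (hA : A.IsHermitian) (hA_nonneg : 0 ≤ A.trace) (hA_sq : (A * A).trace ≤ A.trace ^ 2)
    (hB : B.IsHermitian) (hB_one : B.trace = 1)
    (hB_sq : (B * B).trace * (Fintype.card k - 1) ≤ 1) :
    0 ≤ (A * B).trace := by
  classical
  rcases hA_nonneg.eq_or_lt' with hA_zero | hA_pos
  · have : A = 0 := (trace_mul_self_eq_zero_iff_of_isHermitian hA).1 <|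
      le_antisymm (by simpa [hA_zero] using hA_sq) (trace_mul_self_nonneg_of_isHermitian hA)
    simp [this]
  have hB_pos : 0 < (B * B).trace := by
    refine (trace_mul_self_nonneg_of_isHermitian hB).lt_of_ne' fun h => ?_
    simp [(trace_mul_self_eq_zero_iff_of_isHermitian hB).1 h] at hB_one
  set t := A.trace with ht
  set s := (B * B).trace with hs
  let C := t • B + s • A - (t * s) • (1 : Matrix k k 𝕜)
  have hC : C.IsHermitian := by
    have ht_star : star t = t := (IsSelfAdjoint.of_nonneg hA_nonneg).star_eq
    have hs_star : star s = s := (IsSelfAdjoint.of_nonneg hB_pos.le).star_eq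
    simp only [C, IsHermitian, conjTranspose_sub, conjTranspose_add, conjTranspose_smul,
      conjTranspose_one, hA.eq, hB.eq, star_mul', ht_star, hs_star]
  have hC_sq : (C * C).trace = 2 * (t * s) * (A * B).trace + s ^ 2 * (A * A).trace +
      t ^ 2 * s * (s * (Fintype.card k - 1) - s - 1) := by
    simp only [C, sub_mul, mul_sub, add_mul, mul_add, Matrix.smul_mul, Matrix.mul_smul, trace_sub,
      trace_add, trace_smul, one_mul, mul_one, trace_one, ← ht, ← hs, hB_one, trace_mul_comm B A,
      smul_eq_mul]
    ring
  refine le_of_mul_le_mul_left ?_ (by positivity : 0 < 2 * (t * s))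
  linear_combination trace_mul_self_nonneg_of_isHermitian hC + hC_sq + s ^ 2 * hA_sq +
    t ^ 2 * s * hB_sq

end Purity

section UnitVectors

lemma isCompact_setOf_sum_norm_sq_eq_one (𝕜 n : Type*) [RCLike 𝕜] [Fintype n] :
    IsCompact {a : n → 𝕜 | ∑ x, ‖a x‖ ^ 2 = 1} := by
  convert (isCompact_sphere (0 : EuclideanSpace 𝕜 n) 1).image (PiLp.continuous_ofLp 2 fun _ => 𝕜)
  ext a
  constructor
  · exact fun ha => ⟨WithLp.toLp 2 a, by simpa [EuclideanSpace.norm_eq] using ha, rfl⟩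
  · rintro ⟨b, hb, rfl⟩
    simpa [EuclideanSpace.norm_eq] using hb

lemma exists_eq_smul_sum_norm_sq_eq_one {𝕜 n : Type*} [RCLike 𝕜] [Fintype n] {x : n → 𝕜}
    (hx : x ≠ 0) : ∃ (r : ℝ) (a : n → 𝕜), ∑ i, ‖a i‖ ^ 2 = 1 ∧ x = r • a := by
  have norm_pos : 0 < ‖WithLp.toLp 2 x‖ := by simpa using hx
  refine ⟨‖WithLp.toLp 2 x‖, ‖WithLp.toLp 2 x‖⁻¹ • x, ?_, (smul_inv_smul₀ norm_pos.ne' x).symm⟩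
  rw [← EuclideanSpace.norm_sq_eq (WithLp.toLp 2 (‖WithLp.toLp 2 x‖⁻¹ • x)), WithLp.toLp_smul,
    norm_smul, norm_inv, norm_norm, inv_mul_cancel₀ norm_pos.ne', one_pow]

end UnitVectors

-- By Carathéodory, combinations of at most `finrank ℝ V + 1` points suffice.
lemma isCompact_convexHull_of_finiteDimensional {V : Type*} [AddCommGroup V] [Module ℝ V]
    [TopologicalSpace V] [ContinuousAdd V] [ContinuousSMul ℝ V] [FiniteDimensional ℝ V]
    {S : Set V} (hS : IsCompact S) : IsCompact (convexHull ℝ S) := by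
  let combination (r : ℕ) (q : (Fin r → ℝ) × (Fin r → V)) : V := ∑ i, q.1 i • q.2 i
  have convexHull_eq : convexHull ℝ S = ⋃ r ∈ Finset.range (Module.finrank ℝ V + 2),
      combination r '' (stdSimplex ℝ (Fin r) ×ˢ Set.univ.pi fun _ => S) := by
    apply Set.Subset.antisymm
    · intro x hx
      obtain ⟨ι, _, z, w, hz, hind, hw, hw_one, rfl⟩ := eq_pos_convex_span_of_mem_convexHull hx
      have hcard : Fintype.card ι ≤ Module.finrank ℝ V + 1 :=
        hind.card_le_finrank_succ.trans (by gcongr; exact Submodule.finrank_le _)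
      simp only [Set.mem_iUnion]
      let e := (Fintype.equivFin ι).symm
      refine ⟨Fintype.card ι, by simpa using by omega, (w ∘ e, z ∘ e), ⟨⟨?_, ?_⟩, ?_⟩, ?_⟩
      · exact fun i => (hw _).le
      · simpa [e.sum_comp w] using hw_one
      · exact fun i _ => hz ⟨_, rfl⟩
      · exact e.sum_comp fun i => w i • z i
    · simp only [Set.iUnion_subset_iff]
      rintro r - _ ⟨⟨w, z⟩, ⟨⟨hw, hw_one⟩, hz⟩, rfl⟩
      exact mem_convexHull_of_exists_fintype w z hw hw_one (fun i => hz i trivial) rfl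
  rw [convexHull_eq]
  refine Finset.isCompact_biUnion _ fun r _ => ?_
  have isCompact_pi : IsCompact (Set.univ.pi fun _ : Fin r => S) := isCompact_univ_pi fun _ => hS
  exact ((isCompact_stdSimplex ℝ (Fin r)).prod isCompact_pi).image (by fun_prop)

section Duality

variable {k m n : Type*} [Fintype k] [Fintype m] [Fintype n]

/-- The set of pure product states `|a⟩⟨a| ⊗ |b⟩⟨b|` with unit vectors `a`, `b`. -/
def productStates (m n : Type*) [Fintype m] [Fintype n] : Set (Matrix (m × n) (m × n) ℂ) :=
  Set.image2 productProjector {a : m → ℂ | ∑ x, ‖a x‖ ^ 2 = 1} {b : n → ℂ | ∑ x, ‖b x‖ ^ 2 = 1}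

lemma isCompact_productStates : IsCompact (productStates m n) := by
  rw [productStates, ← Set.image_prod]
  refine ((isCompact_setOf_sum_norm_sq_eq_one ℂ m).prod
    (isCompact_setOf_sum_norm_sq_eq_one ℂ n)).image (continuous_matrix fun p q => ?_)
  simp only [productProjector, kroneckerMap_apply, vecMulVec_apply]
  fun_prop

lemma isHermitian_of_mem_productStates {X : Matrix (m × n) (m × n) ℂ}
    (hX : X ∈ productStates m n) : X.IsHermitian := by
  obtain ⟨a, -, b, -, rfl⟩ := hX
  exact isHermitian_productProjector a b

lemma trace_eq_one_of_mem_productStates {X : Matrix (m × n) (m × n) ℂ}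
    (hX : X ∈ productStates m n) : X.trace = 1 := by
  obtain ⟨a, ha, b, hb, rfl⟩ := hX
  rw [trace_productProjector, ha, hb, Complex.ofReal_one, one_mul]

lemma isBlockPositive_of_forall_mem_productStates {W : Matrix (m × n) (m × n) ℂ}
    (h : ∀ X ∈ productStates m n, 0 ≤ (W * X).trace) : IsBlockPositive W := by
  intro x y
  rcases eq_or_ne x 0 with rfl | hx
  · simp [productProjector]
  rcases eq_or_ne y 0 with rfl | hy
  · simp [productProjector]
  obtain ⟨r, a, ha, rfl⟩ := exists_eq_smul_sum_norm_sq_eq_one hx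
  obtain ⟨s, b, hb, rfl⟩ := exists_eq_smul_sum_norm_sq_eq_one hy
  rw [productProjector_smul, Matrix.mul_smul, trace_smul, smul_eq_mul]
  have scale_nonneg : (0 : ℂ) ≤ r ^ 2 * s ^ 2 := mod_cast (by positivity : 0 ≤ r ^ 2 * s ^ 2)
  exact mul_nonneg scale_nonneg (h _ ⟨a, ha, b, hb, rfl⟩)

lemma exists_forall_eq_trace_mul {R : Type*} [CommSemiring R] (f : Matrix k k R →ₗ[R] R) :
    ∃ F : Matrix k k R, ∀ X, f X = (F * X).trace := by
  classical
  let F : Matrix k k R := of fun i j => f (single j i 1)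
  have f_eq : f = traceLinearMap k R R ∘ₗ LinearMap.mulLeft R F := by
    refine Matrix.ext_linearMap R fun i j => ?_
    ext
    simp [F, trace_mul_single]
  exact ⟨F, fun X => LinearMap.congr_fun f_eq X⟩

lemma trace_add_conjTranspose_sub_smul_one_mul [DecidableEq k] (F : Matrix k k ℂ) (u : ℝ)
    {X : Matrix k k ℂ} (hX : X.IsHermitian) (hX_one : X.trace = 1) :
    ((F + Fᴴ - (2 * u : ℂ) • (1 : Matrix k k ℂ)) * X).trace =
      (2 * ((F * X).trace.re - u) : ℝ) := by
  have trace_conj : (Fᴴ * X).trace = star (F * X).trace := by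
    rw [← trace_conjTranspose, conjTranspose_mul, hX.eq, trace_mul_comm]
  rw [sub_mul, add_mul, trace_sub, trace_add, trace_conj, Complex.star_def, Complex.add_conj,
    Matrix.smul_mul, one_mul, trace_smul, hX_one, smul_eq_mul]
  push_cast
  ring

lemma mem_convexHull_productStates_of_forall_isBlockPositive {ρ : Matrix (m × n) (m × n) ℂ}
    (hρ : ρ.IsHermitian) (hρ_one : ρ.trace = 1)
    (h : ∀ W : Matrix (m × n) (m × n) ℂ, W.IsHermitian → IsBlockPositive W → 0 ≤ (W * ρ).trace) :
    ρ ∈ convexHull ℝ (productStates m n) := by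
  classical
  have : LocallyConvexSpace ℝ (Matrix (m × n) (m × n) ℂ) :=
    inferInstanceAs (LocallyConvexSpace ℝ (m × n → m × n → ℂ))
  by_contra hnot
  obtain ⟨f, u, hfρ, hf⟩ := RCLike.geometric_hahn_banach_point_closed (𝕜 := ℂ)
    (convex_convexHull ℝ _)
    (isCompact_convexHull_of_finiteDimensional isCompact_productStates).isClosed hnot
  obtain ⟨F, hF : ∀ X, f X = (F * X).trace⟩ := exists_forall_eq_trace_mul f.toLinearMap
  let W := F + Fᴴ - (2 * u : ℂ) • (1 : Matrix (m × n) (m × n) ℂ)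
  have hW : W.IsHermitian := by simp [W, IsHermitian, add_comm]
  have hW_pos : IsBlockPositive W := isBlockPositive_of_forall_mem_productStates fun X hX => by
    have u_lt : u < (f X).re := hf X (subset_convexHull ℝ _ hX)
    rw [trace_add_conjTranspose_sub_smul_one_mul F u (isHermitian_of_mem_productStates hX)
      (trace_eq_one_of_mem_productStates hX), ← hF, Complex.zero_le_real]
    linarith
  have lt_u : (f ρ).re < u := hfρ
  have hWρ := h W hW hW_pos
  rw [trace_add_conjTranspose_sub_smul_one_mul F u hρ hρ_one, ← hF, Complex.zero_le_real] at hWρ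
  linarith

lemma mem_convexHull_productStates_of_purity_mul_le_one {ρ : Matrix (m × n) (m × n) ℂ}
    (hρ : ρ.IsHermitian) (hρ_one : ρ.trace = 1)
    (hρ_sq : (ρ * ρ).trace * (Fintype.card (m × n) - 1) ≤ 1) :
    ρ ∈ convexHull ℝ (productStates m n) := by
  refine mem_convexHull_productStates_of_forall_isBlockPositive hρ hρ_one fun W hW hW_pos => ?_
  exact trace_mul_nonneg_of_purity_mul_le_one hW hW_pos.trace_nonneg (hW_pos.trace_mul_self_le hW)
    hρ hρ_one hρ_sq

end Duality

lemma separableState_of_mem_convexHull {d₁ d₂ : ℕ}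
    {ρ : Matrix (Fin d₁ × Fin d₂) (Fin d₁ × Fin d₂) ℂ}
    (h : ρ ∈ convexHull ℝ (productStates (Fin d₁) (Fin d₂))) : SeparableState ρ := by
  obtain ⟨ι, _, w, z, hw, hw_one, hz, rfl⟩ := mem_convexHull_iff_exists_fintype.1 h
  choose a ha b hb hab using hz
  let e := (Fintype.equivFin ι).symm
  refine ⟨Fintype.card ι, w ∘ e, a ∘ e, b ∘ e, fun i => hw _, ?_, fun i => ha _, fun i => hb _, ?_⟩
  · simpa [e.sum_comp w] using hw_one
  · rw [← e.sum_comp]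
    simp [← hab, productProjector]

/-- If `tr(ρ²) ≤ 1/(d₁ d₂ − 1)`, then the bipartite density matrix `ρ` is separable. -/
theorem purity_ball_implies_separable {d₁ d₂ : ℕ} (hd₁ : 0 < d₁) (hd₂ : 0 < d₂)
    (ρ : Matrix (Fin d₁ × Fin d₂) (Fin d₁ × Fin d₂) ℂ) (hρ : IsDensity ρ)
    (hpur : ((ρ * ρ).trace).re ≤ 1 / ((d₁ : ℝ) * (d₂ : ℝ) - 1)) :
    SeparableState ρ := by
  obtain ⟨hρ_pos, hρ_one⟩ := hρ
  have hρ_herm := hρ_pos.isHermitian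
  have hd : (0 : ℝ) ≤ d₁ * d₂ - 1 := by
    rw [sub_nonneg]
    exact_mod_cast Nat.mul_pos hd₁ hd₂
  have hρ_sq : (ρ * ρ).trace * (Fintype.card (Fin d₁ × Fin d₂) - 1) ≤ 1 := by
    simpa using trace_mul_self_mul_le_one_of_re_le_one_div hρ_herm hd hpur
  exact separableState_of_mem_convexHull <|
    mem_convexHull_productStates_of_purity_mul_le_one hρ_herm hρ_one hρ_sq
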